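/- Let n be even, let A be a subgroup of (ℤ/nℤ)^× such that n/2 − a ∈ A for every a ∈ A (equivalently, A satisfies the orbit decomposition A = {jn/k+1 : j ∈ J₊} ∪ {jn/k−1 : j ∈ J₋} with k even and J₋ = k/2 − J₊ modulo k), let r ∈ ℤ/nℤ have even integer representative, and let X = Ar. Then σ_X(y) is a real number for every y ∈ ℤ/nℤ. -/

import Mathlib

open Complex

/-- `e(θ) = exp(2πiθ)`. -/
noncomputable def e2 (θ : ℝ) : ℂ := Complex.exp (2 * Real.pi * Complex.I * θ)

/-- The cyclic supercharacter attached to a subset `X` of `ℤ/nℤ`: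
`σ_X(y) = Σ_{x ∈ X} e(xy/n)`. -/
noncomputable def superchar (n : ℕ) (X : Set (ZMod n)) (y : ZMod n) : ℂ :=
  ∑ᶠ x ∈ X, e2 (((x.val * y.val : ℕ) : ℝ) / (n : ℝ))

/-- The orbit `Ar = {ar : a ∈ A}` of `r` under a unit subgroup `A`. -/
def unitOrbit (n : ℕ) (A : Subgroup (ZMod n)ˣ) (r : ZMod n) : Set (ZMod n) :=
  (fun a : (ZMod n)ˣ => (a : ZMod n) * r) '' (A : Set (ZMod n)ˣ)

/- Conjugation negates the argument of an additive character, so `conj σ_X = σ_{-X}`, and `σ_X` is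
real as soon as `X = -X`. Multiplying by an even `r` kills `n / 2`, so `(n / 2 - a) r = -(a r)` and
the symmetry `a ↦ n / 2 - a` of `A` makes the orbit `A r` symmetric under negation. -/

open scoped ComplexConjugate Pointwise

theorem e2_val_mul_val_div {n : ℕ} [NeZero n] (x y : ZMod n) :
    e2 (((x.val * y.val : ℕ) : ℝ) / (n : ℝ)) = ZMod.stdAddChar (x * y) := by
  have hxy : x * y = (((x.val * y.val : ℕ) : ℤ) : ZMod n) := by simp
  rw [hxy, ZMod.stdAddChar_coe, e2]
  congr 1
  push_cast
  ring

theorem superchar_eq_finsum_stdAddChar {n : ℕ} [NeZero n] (X : Set (ZMod n)) (y : ZMod n) :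
    superchar n X y = ∑ᶠ x ∈ X, ZMod.stdAddChar (x * y) := by
  simp only [superchar, e2_val_mul_val_div]

theorem conj_superchar {n : ℕ} [NeZero n] (X : Set (ZMod n)) (y : ZMod n) :
    conj (superchar n X y) = superchar n (-X) y := by
  simp only [superchar_eq_finsum_stdAddChar]
  calc conj (∑ᶠ x ∈ X, ZMod.stdAddChar (x * y))
      = ∑ᶠ x ∈ X, conj (ZMod.stdAddChar (x * y)) :=
        (starRingEnd ℂ).toAddMonoidHom.map_finsum_mem _ X.toFinite
    _ = ∑ᶠ x ∈ X, ZMod.stdAddChar (-x * y) := by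
        simp only [neg_mul, AddChar.map_neg_eq_conj]
    _ = ∑ᶠ x ∈ -X, ZMod.stdAddChar (x * y) := by
        rw [← Set.image_neg_eq_neg, finsum_mem_image neg_injective.injOn]

theorem exists_real_eq_superchar_of_neg_eq {n : ℕ} [NeZero n] {X : Set (ZMod n)} (hX : -X = X)
    (y : ZMod n) : ∃ t : ℝ, superchar n X y = (t : ℂ) := by
  rw [← conj_eq_iff_real, conj_superchar, hX]

theorem neg_image_mul_right_eq_self {R : Type*} [NonUnitalNonAssocRing R] {S : Set R} {c r : R}
    (hS : ∀ a ∈ S, c - a ∈ S) (hcr : c * r = 0) : -((· * r) '' S) = (· * r) '' S := by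
  rw [Set.neg_eq_self_iff_neg_subset, ← Set.image_neg_eq_neg, Set.image_image]
  rintro _ ⟨a, ha, rfl⟩
  exact ⟨c - a, hS a ha, by simp only [sub_mul, hcr, zero_sub]⟩

theorem natCast_half_mul_eq_zero {n : ℕ} (hn : Even n) {r : ZMod n} (hr : Even r) :
    ((n / 2 : ℕ) : ZMod n) * r = 0 := by
  obtain ⟨k, rfl⟩ := hr
  calc ((n / 2 : ℕ) : ZMod n) * (k + k) = ((n / 2 * 2 : ℕ) : ZMod n) * k := by push_cast; ring
    _ = 0 := by rw [Nat.div_mul_cancel hn.two_dvd, ZMod.natCast_self, zero_mul]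

theorem unitOrbit_eq_image_mul_right {n : ℕ} (A : Subgroup (ZMod n)ˣ) (r : ZMod n) :
    unitOrbit n A r = (· * r) '' (Units.val '' (A : Set (ZMod n)ˣ)) :=
  (Set.image_image (· * r) Units.val _).symm

theorem stmt10_general {n : ℕ} [NeZero n] (hn : Even n) {S : Set (ZMod n)}
    (hS : ∀ a ∈ S, ((n / 2 : ℕ) : ZMod n) - a ∈ S) {r : ZMod n} (hr : Even r) (y : ZMod n) :
    ∃ t : ℝ, superchar n ((· * r) '' S) y = (t : ℂ) :=
  exists_real_eq_superchar_of_neg_eq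
    (neg_image_mul_right_eq_self hS (natCast_half_mul_eq_zero hn hr)) y

theorem stmt10 (n : ℕ) (hn : 0 < n) (he : Even n)
    (A : Subgroup (ZMod n)ˣ)
    (hA : ∀ a : (ZMod n)ˣ, a ∈ A → ∃ b : (ZMod n)ˣ, b ∈ A ∧
      (b : ZMod n) = ((n / 2 : ℕ) : ZMod n) - (a : ZMod n))
    (r : ZMod n) (hr : Even r.val) (y : ZMod n) :
    ∃ t : ℝ, superchar n (unitOrbit n A r) y = (t : ℂ) := by
  have : NeZero n := ⟨hn.ne'⟩
  rw [unitOrbit_eq_image_mul_right]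
  exact stmt10_general he (Set.forall_mem_image.2 hA) (r.natCast_zmod_val ▸ hr.natCast) y
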